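/- arXiv:1710.01872 — 9 statements merged into one kernel-verified Lean document; each statement's English description precedes it below -/
import Mathlib

section
/- Let p be an odd prime, q = p^r, and let t be an integer with 1 ≤ t < r. Then for every integer k with 0 ≤ k ≤ p^t there exists an [n,k] LCD MDS code over F_q of length n = p^t. -/
/-!
The code is a generalized Reed–Solomon code `{(a i * P (e i))_i : deg P < k}`, where the `e i` are
distinct points of `F` (there are enough, as `p ^ t ≤ |F|`) and the multipliers `a i` are nonzero.
It is MDS for every choice of nonzero `a`, and it is LCD exactly when the bilinear form
`B_x(P, Q) = ∑ i, x i * P (e i) * Q (e i)` with weights `x i = a i ^ 2` is nondegenerate on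
polynomials of degree `< k`.

If `x` is the indicator function of `k` indices, Lagrange interpolation shows that `B_x` is
nondegenerate. A single weight `x i` can then be moved to one of any two prescribed distinct values
while keeping `B_x` nondegenerate (`nondegWeights_update`): the determinant of `B_x` is an affine
function of `x i`. Since `|F| > 3` there is `α ≠ 0` with `α ^ 2 ≠ 1`; moving the weights one after
another into `{1, α ^ 2}` makes all of them nonzero squares.
-/

/-- `C` is an `[n, k]` LCD MDS code over the field `F`: it is a `k`-dimensional
linear subspace of `F^n`, it intersects its Euclidean dual trivially, and every
nonzero codeword has Hamming weight at least `n - k + 1`. -/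
def IsLCDMDSCode {F : Type} [Field F] [DecidableEq F] {n : ℕ} (k : ℕ)
    (C : Submodule F (Fin n → F)) : Prop :=
  Module.finrank F C = k ∧
  (∀ x ∈ C, (∀ c ∈ C, ∑ i, x i * c i = 0) → x = 0) ∧
  (∀ x ∈ C, x ≠ 0 → n - k + 1 ≤ (Finset.univ.filter fun i => x i ≠ 0).card)

/-- The bilinear form `(v, w) ↦ ∑ i, x i * φ i v * φ i w` on `V` is nondegenerate. -/
def NondegWeights {F V ι : Type*} [Field F] [AddCommGroup V] [Module F V] [Fintype ι]
    (φ : ι → V →ₗ[F] F) (x : ι → F) : Prop :=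
  ∀ v, (∀ w, ∑ i, x i * φ i v * φ i w = 0) → v = 0

/-- If both modified forms were degenerate, with kernel vectors `v` and `w`, then both `B_x(v, ·)`
and `B_x(w, ·)` would be multiples of `φ i`, so that `v` and `w` would be proportional, with a
ratio forcing `b₁ = b₂`. -/
lemma nondegWeights_update {F V ι : Type*} [Field F] [AddCommGroup V] [Module F V] [Fintype ι]
    [DecidableEq ι] (φ : ι → V →ₗ[F] F) (x : ι → F) (hx : NondegWeights φ x) (i : ι)
    {b₁ b₂ : F} (hb : b₁ ≠ b₂) :
    NondegWeights φ (Function.update x i b₁) ∨ NondegWeights φ (Function.update x i b₂) := by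
  have key : ∀ (b : F) (v w : V), ∑ j, Function.update x i b j * φ j v * φ j w
      = ∑ j, x j * φ j v * φ j w + (b - x i) * φ i v * φ i w := by
    intro b v w
    rw [← Finset.add_sum_erase _ _ (Finset.mem_univ i),
      ← Finset.add_sum_erase _ (fun j => x j * φ j v * φ j w) (Finset.mem_univ i)]
    have : ∑ j ∈ Finset.univ.erase i, Function.update x i b j * φ j v * φ j w
        = ∑ j ∈ Finset.univ.erase i, x j * φ j v * φ j w := by
      refine Finset.sum_congr rfl fun j hj => ?_
      rw [Function.update_of_ne (Finset.ne_of_mem_erase hj)]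
    rw [this, Function.update_self]
    ring
  by_contra! hcon
  obtain ⟨h1, h2⟩ := hcon
  unfold NondegWeights at h1 h2
  push Not at h1 h2
  obtain ⟨v, hv, hv0⟩ := h1
  obtain ⟨w, hw, hw0⟩ := h2
  simp only [key] at hv hw
  have ne : ∀ (b : F) (u : V), u ≠ 0 →
      (∀ z, ∑ j, x j * φ j u * φ j z + (b - x i) * φ i u * φ i z = 0) →
      (b - x i) * φ i u ≠ 0 := by
    intro b u hu h h0
    refine hu (hx u fun z => ?_)
    simpa [h0] using h z
  have hv1 := ne _ _ hv0 hv
  have hw1 := ne _ _ hw0 hw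
  have hz : ((b₂ - x i) * φ i w) • v - ((b₁ - x i) * φ i v) • w = 0 := by
    refine hx _ fun z => ?_
    have e : ∑ j, x j * φ j (((b₂ - x i) * φ i w) • v - ((b₁ - x i) * φ i v) • w) * φ j z
        = ((b₂ - x i) * φ i w) * ∑ j, x j * φ j v * φ j z
          - ((b₁ - x i) * φ i v) * ∑ j, x j * φ j w * φ j z := by
      rw [Finset.mul_sum, Finset.mul_sum, ← Finset.sum_sub_distrib]
      refine Finset.sum_congr rfl fun j _ => ?_
      simp only [map_sub, map_smul, smul_eq_mul]
      ring
    rw [e]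
    linear_combination ((b₂ - x i) * φ i w) * hv z - ((b₁ - x i) * φ i v) * hw z
  have h3 := congrArg (φ i) hz
  simp only [map_sub, map_smul, smul_eq_mul, map_zero] at h3
  have h4 : (b₂ - b₁) * (φ i v * φ i w) = 0 := by linear_combination h3
  rcases mul_eq_zero.1 h4 with h | h
  · exact hb (sub_eq_zero.1 h).symm
  · exact mul_ne_zero (right_ne_zero_of_mul hv1) (right_ne_zero_of_mul hw1) h

lemma exists_nondegWeights_two_values {F V ι : Type*} [Field F] [AddCommGroup V] [Module F V]
    [Fintype ι] (φ : ι → V →ₗ[F] F) (x : ι → F) (hx : NondegWeights φ x)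
    {b₁ b₂ : F} (hb : b₁ ≠ b₂) :
    ∃ y, NondegWeights φ y ∧ ∀ i, y i = b₁ ∨ y i = b₂ := by
  classical
  suffices h : ∀ s : Finset ι, ∃ y, NondegWeights φ y ∧ ∀ i ∈ s, y i = b₁ ∨ y i = b₂ by
    obtain ⟨y, hy, h⟩ := h Finset.univ
    exact ⟨y, hy, fun i => h i (Finset.mem_univ i)⟩
  intro s
  induction s using Finset.induction_on with
  | empty => exact ⟨x, hx, by simp⟩
  | insert i s his ih =>
    obtain ⟨y, hy, hys⟩ := ih
    have aux : ∀ b, b = b₁ ∨ b = b₂ → ∀ j ∈ insert i s,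
        Function.update y i b j = b₁ ∨ Function.update y i b j = b₂ := by
      intro b hb' j hj
      by_cases hji : j = i
      · subst hji
        simpa using hb'
      · rw [Function.update_of_ne hji]
        exact hys j ((Finset.mem_insert.1 hj).resolve_left hji)
    rcases nondegWeights_update φ y hy i hb with h | h
    · exact ⟨_, h, aux _ (Or.inl rfl)⟩
    · exact ⟨_, h, aux _ (Or.inr rfl)⟩

open Polynomial in
/-- Evaluation at a point, as a functional on the polynomials of degree `< k`. -/
noncomputable def evalLT {F : Type*} [Field F] (k : ℕ) (a : F) : degreeLT F k →ₗ[F] F :=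
  (leval a).comp (degreeLT F k).subtype

/-- The indicator weights of `k` indices are nondegenerate: pairing `P` with the Lagrange basis
polynomials shows that `P` vanishes at the `k` chosen points. -/
lemma exists_nondegWeights_evalLT {F : Type*} [Field F] {n k : ℕ} (hk : k ≤ n)
    (e : Fin n → F) (he : Function.Injective e) :
    ∃ x, NondegWeights (fun i => evalLT k (e i)) x := by
  classical
  obtain ⟨s, -, hs⟩ := Finset.exists_subset_card_eq
    (s := (Finset.univ : Finset (Fin n))) (n := k) (by simpa using hk)
  refine ⟨fun i => if i ∈ s then 1 else 0, fun P hP => ?_⟩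
  have hzero : ∀ j ∈ s, (P : Polynomial F).eval (e j) = 0 := by
    intro j hj
    have hd := Lagrange.degree_interpolate_lt (s := s) (v := e) (Pi.single j (1 : F)) he.injOn
    rw [hs] at hd
    have := hP ⟨_, Polynomial.mem_degreeLT.2 hd⟩
    simp only [evalLT, LinearMap.comp_apply, Submodule.subtype_apply, Polynomial.leval_apply,
      ite_mul, one_mul, zero_mul, Finset.sum_ite_mem, Finset.univ_inter] at this
    rw [Finset.sum_congr rfl (fun i hi => by
      rw [Lagrange.eval_interpolate_at_node _ he.injOn hi])] at this
    simpa [Pi.single_apply, hj] using this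
  refine Subtype.ext (Polynomial.eq_zero_of_degree_lt_of_eval_index_eq_zero s he.injOn ?_ hzero)
  rw [hs]
  exact Polynomial.mem_degreeLT.1 P.2

theorem stmt0 (p r t : ℕ) (hp : p.Prime) (hpodd : Odd p) (ht : 1 ≤ t) (htr : t < r)
    (F : Type) [Field F] [Fintype F] [DecidableEq F]
    (hcard : Fintype.card F = p ^ r)
    (k : ℕ) (hk : k ≤ p ^ t) :
    ∃ C : Submodule F (Fin (p ^ t) → F), IsLCDMDSCode k C := by
  have hp2 := hp.two_le
  have h4 : 3 < Fintype.card F := by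
    have h1 : p ^ 2 ≤ p ^ r := Nat.pow_le_pow_right hp.pos (by omega)
    have h2 : 2 ^ 2 ≤ p ^ 2 := Nat.pow_le_pow_left hp2 2
    omega
  obtain ⟨α, hα⟩ : ∃ α : F, α ∉ ({0, 1, -1} : Finset F) := by
    by_contra! h
    have h1 : Fintype.card F ≤ ({0, 1, -1} : Finset F).card :=
      Finset.card_le_card fun a _ => h a
    have h2 : ({0, 1, -1} : Finset F).card ≤ 3 := Finset.card_le_three
    omega
  simp only [Finset.mem_insert, Finset.mem_singleton, not_or] at hα
  obtain ⟨hα0, hα1, hα2⟩ := hα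
  have hne : (1 : F) ≠ α ^ 2 := fun h => by
    rcases sq_eq_sq_iff_eq_or_eq_neg.1 (h.symm.trans (one_pow 2).symm) with h | h
    · exact hα1 h
    · exact hα2 h
  obtain ⟨e⟩ : Nonempty (Fin (p ^ t) ↪ F) := by
    apply Function.Embedding.nonempty_of_card_le
    rw [Fintype.card_fin, hcard]
    exact Nat.pow_le_pow_right hp.pos htr.le
  obtain ⟨x, hx⟩ := exists_nondegWeights_evalLT hk e e.injective
  obtain ⟨y, hy, hyv⟩ := exists_nondegWeights_two_values _ x hx hne
  have hroot : ∀ i, ∃ a : F, a ≠ 0 ∧ a ^ 2 = y i := by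
    intro i
    rcases hyv i with h | h
    · exact ⟨1, one_ne_zero, by rw [h, one_pow]⟩
    · exact ⟨α, hα0, h.symm⟩
  choose a ha0 ha using hroot
  let f : Polynomial.degreeLT F k →ₗ[F] (Fin (p ^ t) → F) :=
    LinearMap.pi fun i => a i • evalLT k (e i)
  have hf : ∀ P i, f P i = a i * evalLT k (e i) P := fun P i => rfl
  have hform : ∀ P Q, ∑ i, f P i * f Q i = ∑ i, y i * evalLT k (e i) P * evalLT k (e i) Q := by
    intro P Q
    refine Finset.sum_congr rfl fun i _ => ?_
    rw [hf, hf, ← ha]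
    ring
  have hinj : Function.Injective f := by
    rw [injective_iff_map_eq_zero]
    intro P hP
    refine hy P fun Q => ?_
    rw [← hform, hP]
    simp
  refine ⟨LinearMap.range f, ?_, ?_, ?_⟩
  · rw [LinearMap.finrank_range_of_inj hinj,
      LinearEquiv.finrank_eq (Polynomial.degreeLTEquiv F k), Module.finrank_fin_fun]
  · rintro _ ⟨P, rfl⟩ h
    rw [hy P fun Q => by rw [← hform]; exact h _ ⟨Q, rfl⟩, map_zero]
  · rintro _ ⟨P, rfl⟩ h
    -- A codeword with at least `k` zeros comes from a polynomial of degree `< k` with `k` roots.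
    by_contra! hlt
    have hsum := Finset.card_filter_add_card_filter_not
      (s := (Finset.univ : Finset (Fin (p ^ t)))) (fun i => f P i ≠ 0)
    rw [Finset.card_univ, Fintype.card_fin] at hsum
    apply h
    have hP0 : P = 0 := by
      refine Subtype.ext (Polynomial.eq_zero_of_degree_lt_of_eval_index_eq_zero
        (Finset.univ.filter fun i => ¬ f P i ≠ 0) e.injective.injOn ?_ ?_)
      · refine lt_of_lt_of_le (Polynomial.mem_degreeLT.1 P.2) ?_
        exact Nat.cast_le.2 (by omega)
      · intro i hi
        have h0 := not_not.1 (Finset.mem_filter.1 hi).2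
        exact (mul_eq_zero.1 ((hf P i).symm.trans h0)).resolve_left (ha0 i)
    rw [hP0, map_zero]
end

section
/- Let p be an odd prime, q = p^r, and let n < q be a positive integer such that p divides n and n−1 divides q−1. Then for every integer k with 0 ≤ k ≤ n there exists an [n,k] LCD MDS code over F_q. -/
/-- The determinant of `M + diagonal (x, d)` is affine in the first diagonal entry `x`; the slope
is the corresponding determinant for the lower right block. -/
lemma det_add_diagonal_cons {F : Type} [Field F] {k : ℕ}
    (M : Matrix (Fin (k + 1)) (Fin (k + 1)) F) (x : F) (d : Fin k → F) :
    (M + Matrix.diagonal (Fin.cons x d : Fin (k + 1) → F)).det =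
      x * (M.submatrix Fin.succ Fin.succ + Matrix.diagonal d).det +
        (M + Matrix.diagonal (Fin.cons 0 d : Fin (k + 1) → F)).det := by
  have hsub : ∀ (y : F) (j : Fin (k + 1)),
      (M + Matrix.diagonal (Fin.cons y d : Fin (k + 1) → F)).submatrix Fin.succ j.succAbove =
      (M + Matrix.diagonal (Fin.cons 0 d : Fin (k + 1) → F)).submatrix Fin.succ j.succAbove := by
    intro y j
    ext a b
    simp [Matrix.diagonal_apply]
  have h0 : (M + Matrix.diagonal (Fin.cons 0 d : Fin (k + 1) → F)).submatrix Fin.succ Fin.succ =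
      M.submatrix Fin.succ Fin.succ + Matrix.diagonal d := by
    ext a b
    simp [Matrix.diagonal_apply]
  rw [Matrix.det_succ_row_zero, Matrix.det_succ_row_zero (M + Matrix.diagonal (Fin.cons 0 d))]
  simp only [hsub x]
  rw [Fin.sum_univ_succ, Fin.sum_univ_succ]
  simp [(Fin.succ_ne_zero _).symm, h0]
  ring

lemma exists_det_add_diagonal_ne_zero {F : Type} [Field F] {g : F} (hg : g ^ 2 ≠ 1) (hg0 : g ≠ 0) :
    ∀ {k : ℕ} (M : Matrix (Fin k) (Fin k) F),
      ∃ d : Fin k → F, (∀ i, d i ≠ 0) ∧ (M + Matrix.diagonal fun i => d i ^ 2).det ≠ 0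
  | 0, M => ⟨fun _ => 1, by simp, by simp⟩
  | k + 1, M => by
    obtain ⟨d, hd, hdet⟩ := exists_det_add_diagonal_ne_zero hg hg0 (M.submatrix Fin.succ Fin.succ)
    have hsq : ∀ x : F, (fun i => (Fin.cons x d : Fin (k + 1) → F) i ^ 2) =
        (Fin.cons (x ^ 2) fun i => d i ^ 2 : Fin (k + 1) → F) := by
      intro x
      ext i
      refine Fin.cases ?_ (fun j => ?_) i <;> simp
    by_contra hcon
    push Not at hcon
    have h1 := hcon (Fin.cons 1 d) (fun i => by refine Fin.cases ?_ (fun j => ?_) i <;> simp [hd])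
    have h2 := hcon (Fin.cons g d)
      (fun i => by refine Fin.cases ?_ (fun j => ?_) i <;> simp [hd, hg0])
    rw [hsq, det_add_diagonal_cons] at h1 h2
    -- An affine function with nonzero slope cannot vanish at both `1` and `g ^ 2`.
    have h3 : (g ^ 2 - 1) *
        (M.submatrix Fin.succ Fin.succ + Matrix.diagonal fun i => d i ^ 2).det = 0 := by
      linear_combination h2 - h1
    exact (mul_ne_zero (sub_ne_zero.2 hg) hdet) h3

/-- The information coordinates of a systematic encoder `x ↦ (x, ψ x)` can be rescaled so that
the standard bilinear form restricted to the code is nondegenerate. -/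
lemma exists_scaling_nondegenerate {F : Type} [Field F] {g : F} (hg : g ^ 2 ≠ 1) (hg0 : g ≠ 0)
    {k m : ℕ} (ψ : (Fin k → F) →ₗ[F] (Fin m → F)) :
    ∃ d : Fin k → F, (∀ i, d i ≠ 0) ∧ ∀ y : Fin k → F,
      (∀ x : Fin k → F, ∑ i, (d i * y i) * (d i * x i) + ∑ j, ψ y j * ψ x j = 0) → y = 0 := by
  set A := LinearMap.toMatrix' ψ with hA
  have hψ : ∀ x, ψ x = A.mulVec x := fun x => by rw [hA, LinearMap.toMatrix'_mulVec]
  obtain ⟨d, hd, hdet⟩ := exists_det_add_diagonal_ne_zero hg hg0 (A.transpose * A)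
  refine ⟨d, hd, fun y hy => Matrix.eq_zero_of_mulVec_eq_zero hdet ?_⟩
  refine dotProduct_eq_zero _ fun x => ?_
  rw [← hy x, Matrix.add_mulVec, add_dotProduct, add_comm, ← Matrix.mulVec_mulVec,
    Matrix.mulVec_transpose, ← Matrix.dotProduct_mulVec]
  congr 1
  · simp only [dotProduct, Matrix.mulVec_diagonal]
    exact Finset.sum_congr rfl fun i _ => by ring
  · simp only [hψ, dotProduct]

theorem stmt1 (p r n : ℕ) (hp : p.Prime) (hpodd : Odd p)
    (F : Type) [Field F] [Fintype F] [DecidableEq F]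
    (hcard : Fintype.card F = p ^ r)
    (hn : 0 < n) (hnq : n < p ^ r) (hpn : p ∣ n) (hdvd : (n - 1) ∣ (p ^ r - 1))
    (k : ℕ) (hk : k ≤ n) :
    ∃ C : Submodule F (Fin n → F), IsLCDMDSCode k C := by
  have hp3 : 3 ≤ p := by
    have := hp.two_le
    obtain ⟨t, rfl⟩ := hpodd
    omega
  have hn3 : p ≤ n := Nat.le_of_dvd hn hpn
  obtain ⟨g, hgmem⟩ : ∃ g : F, g ∉ ({0, 1, -1} : Finset F) := by
    by_contra hcon
    push Not at hcon
    have h1 := Finset.card_le_card (fun x _ => hcon x : (Finset.univ : Finset F) ⊆ {0, 1, -1})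
    have h2 := Finset.card_le_three (a := (0 : F)) (b := 1) (c := -1)
    rw [Finset.card_univ] at h1
    omega
  simp only [Finset.mem_insert, Finset.mem_singleton, not_or] at hgmem
  obtain ⟨hg0, hg1, hg2⟩ := hgmem
  have hg : g ^ 2 ≠ 1 := fun h => (sq_eq_one_iff.1 h).elim hg1 hg2
  obtain ⟨a⟩ : Nonempty (Fin n ↪ F) :=
    Function.Embedding.nonempty_of_card_le (by rw [Fintype.card_fin]; omega)
  obtain ⟨m, rfl⟩ := Nat.exists_eq_add_of_le hk
  -- `P x` has degree less than `k` and takes the values `x` at the first `k` evaluation points.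
  let b : Fin k → F := fun i => a (Fin.castAdd m i)
  have hb : Set.InjOn b ((Finset.univ : Finset (Fin k)) : Set (Fin k)) := fun i _ j _ h =>
    Fin.castAdd_injective k m (a.injective h)
  let P := Lagrange.interpolate (Finset.univ : Finset (Fin k)) b
  let ψ : (Fin k → F) →ₗ[F] (Fin m → F) :=
    LinearMap.pi fun j => (Polynomial.leval (a (Fin.natAdd k j))).comp P
  obtain ⟨d, hd, hnondeg⟩ := exists_scaling_nondegenerate hg hg0 ψ
  let w : Fin (k + m) → F := Fin.append d fun _ => 1
  have hw : ∀ j, w j ≠ 0 := fun j => by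
    refine Fin.addCases (fun i => ?_) (fun i => ?_) j <;> simp [w, hd]
  let φ : (Fin k → F) →ₗ[F] (Fin (k + m) → F) :=
    LinearMap.pi fun j => w j • (Polynomial.leval (a j)).comp P
  have hφ : ∀ x j, φ x j = w j * (P x).eval (a j) := fun x j => rfl
  have hφl : ∀ x i, φ x (Fin.castAdd m i) = d i * x i := fun x i => by
    rw [hφ, show w (Fin.castAdd m i) = d i from Fin.append_left _ _ i]
    exact congrArg _ (Lagrange.eval_interpolate_at_node x hb (Finset.mem_univ i))
  have hφr : ∀ x j, φ x (Fin.natAdd k j) = ψ x j := fun x j => by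
    rw [hφ, show w (Fin.natAdd k j) = 1 from Fin.append_right _ _ j, one_mul]
    rfl
  have hinj : Function.Injective φ := by
    intro x y hxy
    ext i
    have := congrFun hxy (Fin.castAdd m i)
    rw [hφl, hφl] at this
    exact mul_left_cancel₀ (hd i) this
  refine ⟨LinearMap.range φ, ?_, ?_, ?_⟩
  · rw [LinearMap.finrank_range_of_inj hinj, Module.finrank_fin_fun]
  · rintro _ ⟨y, rfl⟩ h
    rw [hnondeg y fun x => ?_, map_zero]
    have := h _ ⟨x, rfl⟩
    rw [Fin.sum_univ_add] at this
    simpa only [hφl, hφr] using this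
  · rintro _ ⟨y, rfl⟩ hy
    have hP : P y ≠ 0 := fun h0 => hy (by ext j; rw [hφ, h0]; simp)
    have hdeg : (P y).natDegree < k := by
      have := Lagrange.degree_interpolate_lt y hb
      rw [Finset.card_univ, Fintype.card_fin] at this
      exact (Polynomial.natDegree_lt_iff_degree_lt hP).2 this
    have hz : (Finset.univ.filter fun j => ¬ φ y j ≠ 0).card ≤ (P y).natDegree := by
      rw [← Finset.card_map a]
      refine Polynomial.card_le_degree_of_subset_roots fun z hz => ?_
      obtain ⟨j, hj, rfl⟩ := Finset.mem_map.1 (Finset.mem_val ▸ hz)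
      have hj' : φ y j = 0 := not_not.1 (Finset.mem_filter.1 hj).2
      rw [Polynomial.mem_roots hP]
      exact (mul_eq_zero.1 ((hφ y j).symm.trans hj')).resolve_left (hw j)
    have htot := Finset.card_filter_add_card_filter_not
      (s := (Finset.univ : Finset (Fin (k + m)))) (fun j => φ y j ≠ 0)
    rw [Finset.card_univ, Fintype.card_fin] at htot
    omega
end

section
/- Let p be an odd prime, q = p^r, and let ℓ be a divisor of q−1 such that pℓ < q. Set n = pℓ. If ℓ is even, then for every integer m with 0 ≤ m ≤ ℓ−1 there exists an [n, 2ℓ−2m] LCD MDS code over F_q. If ℓ is odd, then for every integer m with 0 ≤ m ≤ ℓ there exists an [n, 2ℓ−2m] LCD MDS code over F_q. -/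
/-- The weighted form `∑ i, d i * x i * y i` is nondegenerate on the subspace `C`. -/
def WeightNondeg {F ι : Type} [Field F] [Fintype ι] (d : ι → F) (C : Submodule F (ι → F)) :
    Prop :=
  ∀ x ∈ C, (∀ y ∈ C, ∑ i, d i * x i * y i = 0) → x = 0

/-- Replacing one weight by either of two distinct values keeps the form nondegenerate for at
least one of them: if `B(x, ·) = -s x_j (·)_j` and `B(y, ·) = -t y_j (·)_j` with `x_j, y_j ≠ 0`,
then symmetry of `B` forces `s = t`. -/
lemma WeightNondeg.update {F ι : Type} [Field F] [Fintype ι] [DecidableEq ι] {d : ι → F}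
    {C : Submodule F (ι → F)} (h : WeightNondeg d C) (j : ι) {a b : F} (hab : a ≠ b) :
    WeightNondeg (Function.update d j a) C ∨ WeightNondeg (Function.update d j b) C := by
  have key : ∀ (t : F) (x y : ι → F), ∑ i, Function.update d j t i * x i * y i =
      ∑ i, d i * x i * y i + (t - d j) * x j * y j := by
    intro t x y
    rw [← sub_eq_iff_eq_add', ← Finset.sum_sub_distrib, Finset.sum_eq_single j]
    · simp; ring
    · intro i _ hi; simp [Function.update_of_ne hi]
    · simp
  have hne : ∀ (t : F) (x : ι → F), x ∈ C → x ≠ 0 →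
      (∀ y ∈ C, ∑ i, Function.update d j t i * x i * y i = 0) → x j ≠ 0 := by
    intro t x hx hx0 hy hxj
    refine hx0 (h x hx fun y hyC => ?_)
    simpa [key, hxj] using hy y hyC
  by_contra hcon
  simp only [WeightNondeg, not_or, not_forall] at hcon
  obtain ⟨⟨x, hx, hxy, hx0⟩, ⟨y, hy, hyx, hy0⟩⟩ := hcon
  have hxj := hne a x hx hx0 hxy
  have hyj := hne b y hy hy0 hyx
  have h1 := hxy y hy
  have h2 := hyx x hx
  rw [key] at h1 h2
  have hsymm : ∑ i, d i * x i * y i = ∑ i, d i * y i * x i :=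
    Finset.sum_congr rfl fun i _ => by ring
  have h3 : (a - b) * (x j * y j) = 0 := by linear_combination h1 - h2 - hsymm
  exact mul_ne_zero (sub_ne_zero.2 hab) (mul_ne_zero hxj hyj) h3

lemma WeightNondeg.exists_two_valued {F ι : Type} [Field F] [Fintype ι] [DecidableEq ι]
    {d : ι → F} {C : Submodule F (ι → F)} (h : WeightNondeg d C) {a b : F} (hab : a ≠ b) :
    ∃ e : ι → F, WeightNondeg e C ∧ ∀ i, e i = a ∨ e i = b := by
  suffices H : ∀ s : Finset ι, ∃ e : ι → F, WeightNondeg e C ∧ ∀ i ∈ s, e i = a ∨ e i = b by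
    simpa using H Finset.univ
  intro s
  induction s using Finset.induction_on with
  | empty => exact ⟨d, h, by simp⟩
  | insert j s _ ih =>
    obtain ⟨e, he, hes⟩ := ih
    rcases he.update j hab with h' | h'
    all_goals
      refine ⟨_, h', fun i hi => ?_⟩
      by_cases hij : i = j
      · subst hij; simp
      · rw [Function.update_of_ne hij]
        exact hes i (Finset.mem_of_mem_insert_of_ne hi hij)

/-- Reed–Solomon codes: an `[n, k]` MDS code exists for `k ≤ n ≤ q`, and some weighted
form is nondegenerate on it; the indicator of any `k` coordinates serves as the weight. -/
lemma exists_reedSolomon {F : Type} [Field F] [Fintype F] [DecidableEq F] {n k : ℕ}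
    (hkn : k ≤ n) (hn : n ≤ Fintype.card F) :
    ∃ C : Submodule F (Fin n → F), Module.finrank F C = k ∧ (∃ d, WeightNondeg d C) ∧
      ∀ x ∈ C, x ≠ 0 → n - k + 1 ≤ (Finset.univ.filter fun i => x i ≠ 0).card := by
  obtain ⟨α⟩ : Nonempty (Fin n ↪ F) :=
    Function.Embedding.nonempty_of_card_le (by simpa using hn)
  let ev : Polynomial F →ₗ[F] (Fin n → F) := LinearMap.pi fun i => Polynomial.leval (α i)
  have hev : ∀ f i, ev f i = f.eval (α i) := fun f i => rfl
  obtain ⟨s, -, hs⟩ := Finset.exists_subset_card_eq (s := (Finset.univ : Finset (Fin n)))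
    (n := k) (by simpa using hkn)
  have hzero : ∀ f ∈ Polynomial.degreeLT F k, (∀ i ∈ s, ev f i = 0) → f = 0 := by
    intro f hf h0
    refine Polynomial.eq_zero_of_degree_lt_of_eval_index_eq_zero s (v := α)
      α.injective.injOn ?_ h0
    rw [hs]; exact Polynomial.mem_degreeLT.1 hf
  refine ⟨(Polynomial.degreeLT F k).map ev, ?_, ⟨fun i => if i ∈ s then 1 else 0, ?_⟩, ?_⟩
  · have hinj : Function.Injective (ev.domRestrict (Polynomial.degreeLT F k)) := by
      rw [← LinearMap.ker_eq_bot, LinearMap.ker_eq_bot']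
      rintro ⟨f, hf⟩ h
      exact Subtype.ext (hzero f hf fun i _ => congrFun h i)
    have h1 := LinearMap.finrank_range_of_inj hinj
    rw [LinearMap.range_domRestrict] at h1
    rw [h1, (Polynomial.degreeLTEquiv F k).finrank_eq]
    simp
  · rintro _ ⟨f, hf, rfl⟩ h
    have : f = 0 := by
      refine hzero f hf fun j hj => ?_
      -- pairing with the codeword that is `1` at `j` and `0` on the rest of `s` extracts `f (α j)`
      have hg : ∀ i ∈ s, ev (Lagrange.interpolate s α (Pi.single j 1)) i
          = (Pi.single j 1 : Fin n → F) i := fun i hi =>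
        Lagrange.eval_interpolate_at_node _ α.injective.injOn hi
      have h2 := h _ ⟨Lagrange.interpolate s α (Pi.single j 1), Polynomial.mem_degreeLT.2 (by
        rw [← hs]; exact Lagrange.degree_interpolate_lt _ α.injective.injOn), rfl⟩
      rw [Finset.sum_eq_single j] at h2
      · rw [hg j hj] at h2
        simpa [hj] using h2
      · intro i _ hij
        by_cases hi : i ∈ s
        · rw [hg i hi]; simp [hij]
        · simp [hi]
      · simp
    simp [this]
  · rintro _ ⟨f, hf, rfl⟩ hx
    have hf0 : f ≠ 0 := by rintro rfl; simp at hx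
    have hlt : f.natDegree < k :=
      (Polynomial.natDegree_lt_iff_degree_lt hf0).2 (Polynomial.mem_degreeLT.1 hf)
    have hz : (Finset.univ.filter fun i => ev f i = 0).card < k := by
      by_contra! hge
      refine hf0 (Polynomial.eq_zero_of_degree_lt_of_eval_index_eq_zero
        (Finset.univ.filter fun i => ev f i = 0) (v := α) α.injective.injOn ?_ ?_)
      · exact (Polynomial.mem_degreeLT.1 hf).trans_le (by exact_mod_cast hge)
      · intro i hi; exact (Finset.mem_filter.1 hi).2
    have hsum := Finset.card_filter_add_card_filter_not (s := (Finset.univ : Finset (Fin n)))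
      (fun i => ev f i = 0)
    simp only [Finset.card_univ, Fintype.card_fin] at hsum
    simp only [ne_eq]
    omega

lemma exists_isLCDMDSCode {F : Type} [Field F] [Fintype F] [DecidableEq F] {n k : ℕ}
    (hkn : k ≤ n) (hn : n ≤ Fintype.card F) (hF : 3 < Fintype.card F) :
    ∃ C : Submodule F (Fin n → F), IsLCDMDSCode k C := by
  obtain ⟨C, hdim, ⟨d, hd⟩, hwt⟩ := exists_reedSolomon (F := F) hkn hn
  obtain ⟨c, hc⟩ : ∃ c : F, c ∉ ({0, 1, -1} : Finset F) := by
    by_contra! hall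
    have h1 := Finset.card_le_card (fun x _ => hall x : (Finset.univ : Finset F) ⊆ _)
    have h2 := Finset.card_le_three (a := (0 : F)) (b := 1) (c := -1)
    rw [Finset.card_univ] at h1
    omega
  simp only [Finset.mem_insert, Finset.mem_singleton, not_or] at hc
  obtain ⟨hc0, hc1, hc2⟩ := hc
  have hcc : (1 : F) ≠ c ^ 2 := by
    intro h
    rcases sq_eq_sq_iff_eq_or_eq_neg.1 (h.symm.trans (one_pow 2).symm) with h | h
    exacts [hc1 h, hc2 h]
  obtain ⟨e, he, he2⟩ := hd.exists_two_valued hcc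
  have hv : ∀ i, ∃ v : F, v ≠ 0 ∧ e i = v ^ 2 := by
    intro i
    rcases he2 i with h | h
    · exact ⟨1, one_ne_zero, by simpa using h⟩
    · exact ⟨c, hc0, h⟩
  choose v hv0 hve using hv
  let φ : (Fin n → F) ≃ₗ[F] (Fin n → F) :=
    LinearEquiv.piCongrRight fun i => LinearEquiv.smulOfNeZero F F (v i) (hv0 i)
  have hφ : ∀ x i, φ x i = v i * x i := fun x i => rfl
  refine ⟨C.map (φ : (Fin n → F) →ₗ[F] (Fin n → F)), ?_, ?_, ?_⟩
  · rw [LinearEquiv.finrank_map_eq, hdim]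
  · rintro _ ⟨x, hx, rfl⟩ h
    have : x = 0 := by
      refine he x hx fun y hy => ?_
      rw [← h _ ⟨y, hy, rfl⟩]
      refine Finset.sum_congr rfl fun i _ => ?_
      simp only [LinearEquiv.coe_coe, hφ, hve]
      ring
    simp [this]
  · rintro _ ⟨x, hx, rfl⟩ h
    have hx0 : x ≠ 0 := by rintro rfl; simp at h
    simpa [hφ, hv0] using hwt x hx hx0

theorem stmt2 (p r ℓ : ℕ) (hp : p.Prime) (hpodd : Odd p)
    (F : Type) [Field F] [Fintype F] [DecidableEq F]
    (hcard : Fintype.card F = p ^ r)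
    (hdvd : ℓ ∣ p ^ r - 1) (hlt : p * ℓ < p ^ r) :
    (Even ℓ → ∀ m : ℕ, m ≤ ℓ - 1 →
      ∃ C : Submodule F (Fin (p * ℓ) → F), IsLCDMDSCode (2 * ℓ - 2 * m) C) ∧
    (Odd ℓ → ∀ m : ℕ, m ≤ ℓ →
      ∃ C : Submodule F (Fin (p * ℓ) → F), IsLCDMDSCode (2 * ℓ - 2 * m) C) := by
  have hp2 := hp.two_le
  have hp3 : 3 ≤ p := by
    obtain ⟨t, rfl⟩ := hpodd
    omega
  have hF := Fintype.one_lt_card (α := F)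
  have hℓ : 0 < ℓ := by
    rcases Nat.eq_zero_or_pos ℓ with rfl | h
    · rw [zero_dvd_iff] at hdvd
      omega
    · exact h
  have h3 : 3 < Fintype.card F := by
    rw [hcard]
    nlinarith
  have hk : ∀ m, 2 * ℓ - 2 * m ≤ p * ℓ := fun m =>
    (Nat.sub_le _ _).trans (Nat.mul_le_mul_right ℓ hp2)
  exact ⟨fun _ m _ => exists_isLCDMDSCode (hk m) (hcard ▸ hlt.le) h3,
    fun _ m _ => exists_isLCDMDSCode (hk m) (hcard ▸ hlt.le) h3⟩
end

section
/- Let q ≥ 5 be an odd prime power which is a perfect square, and let n < q be such that n−1 is an odd divisor of q−1. Then for every integer m with 0 ≤ m ≤ n/2 there exists an [n, n−2m] LCD MDS code over F_q. -/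
open Polynomial

/-- The weighted form `(x, y) ↦ ∑ i, d i * x i * y i` has trivial radical on `C`. -/
def NondegOn {F : Type} [Field F] {n : ℕ} (C : Submodule F (Fin n → F)) (d : Fin n → F) : Prop :=
  ∀ x ∈ C, (∀ c ∈ C, ∑ i, d i * x i * c i = 0) → x = 0

theorem sum_update_weight {F : Type} [Field F] {n : ℕ} (d : Fin n → F) (i : Fin n) (t : F)
    (x c : Fin n → F) :
    ∑ j, Function.update d i t j * x j * c j
      = ∑ j, d j * x j * c j + (t - d i) * x i * c i := by
  have h : ∀ j, Function.update d i t j * x j * c j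
      = d j * x j * c j + if j = i then (t - d i) * x i * c i else 0 := by
    intro j
    by_cases hj : j = i
    · subst hj; simp; ring
    · simp [hj]
  simp [h, Finset.sum_add_distrib]

/-- At most one value of a single weight destroys nondegeneracy: nonzero radical vectors `x`, `y`
for two values `s`, `t` have `x i, y i ≠ 0`, and evaluating `B_d(x, y)` through either of them
gives `s = t`. -/
theorem NondegOn.update {F : Type} [Field F] {n : ℕ} {C : Submodule F (Fin n → F)}
    {d : Fin n → F} (h : NondegOn C d) (i : Fin n) {s t : F} (hst : s ≠ t) :
    NondegOn C (Function.update d i s) ∨ NondegOn C (Function.update d i t) := by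
  by_contra hcon
  simp only [NondegOn, not_or, not_forall] at hcon
  obtain ⟨⟨x, hxC, hx, hx0⟩, ⟨y, hyC, hy, hy0⟩⟩ := hcon
  simp only [sum_update_weight] at hx hy
  have hxi : x i ≠ 0 := fun h0 => hx0 (h x hxC fun c hc => by simpa [h0] using hx c hc)
  have hyi : y i ≠ 0 := fun h0 => hy0 (h y hyC fun c hc => by simpa [h0] using hy c hc)
  have h1 := hx y hyC
  have h2 := hy x hxC
  have hsymm : ∑ j, d j * y j * x j = ∑ j, d j * x j * y j :=
    Finset.sum_congr rfl fun j _ => by ring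
  rw [hsymm] at h2
  have h3 : (s - t) * (x i * y i) = 0 := by linear_combination h1 - h2
  exact (mul_ne_zero (sub_ne_zero.2 hst) (mul_ne_zero hxi hyi)) h3

theorem NondegOn.exists_weights {F : Type} [Field F] {n : ℕ} {C : Submodule F (Fin n → F)}
    {d : Fin n → F} (h : NondegOn C d) {s t : F} (hst : s ≠ t) :
    ∃ d' : Fin n → F, (∀ i, d' i = s ∨ d' i = t) ∧ NondegOn C d' := by
  suffices H : ∀ I : Finset (Fin n), ∃ d' : Fin n → F,
      (∀ i ∈ I, d' i = s ∨ d' i = t) ∧ NondegOn C d' by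
    obtain ⟨d', h1, h2⟩ := H Finset.univ
    exact ⟨d', fun i => h1 i (Finset.mem_univ i), h2⟩
  intro I
  induction I using Finset.induction_on with
  | empty => exact ⟨d, by simp, h⟩
  | insert i I hi ih =>
    obtain ⟨d', h1, h2⟩ := ih
    have key : ∀ u, (u = s ∨ u = t) →
        ∀ j ∈ insert i I, Function.update d' i u j = s ∨ Function.update d' i u j = t := by
      intro u hu j hj
      by_cases hji : j = i
      · subst hji; simpa using hu
      · simpa [hji] using h1 j ((Finset.mem_insert.1 hj).resolve_left hji)
    rcases h2.update i hst with h3 | h3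
    · exact ⟨_, key s (Or.inl rfl), h3⟩
    · exact ⟨_, key t (Or.inr rfl), h3⟩

/-- Encoding map of the generalized Reed–Solomon code with evaluation points `α` and column
multipliers `a`: a polynomial `p` of degree `< k` goes to `(a i * p(α i))_i`. -/
noncomputable def grsMap {F : Type} [Field F] {n : ℕ} (k : ℕ) (α a : Fin n → F) :
    degreeLT F k →ₗ[F] (Fin n → F) where
  toFun p i := a i * (p : F[X]).eval (α i)
  map_add' p r := by ext i; simp [mul_add]
  map_smul' c p := by ext i; simp; ring

theorem grsMap_apply {F : Type} [Field F] {n : ℕ} (k : ℕ) (α a : Fin n → F)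
    (p : degreeLT F k) (i : Fin n) : grsMap k α a p i = a i * (p : F[X]).eval (α i) := rfl

theorem eq_zero_of_vanish {F : Type} [Field F] {n k : ℕ} {α : Fin n → F}
    (hα : Function.Injective α) (p : degreeLT F k) (I : Finset (Fin n)) (hI : k ≤ I.card)
    (hp : ∀ i ∈ I, (p : F[X]).eval (α i) = 0) : p = 0 := by
  refine Subtype.ext (Polynomial.eq_zero_of_degree_lt_of_eval_index_eq_zero I
    (v := α) hα.injOn ?_ hp)
  exact lt_of_lt_of_le (mem_degreeLT.1 p.2) (by exact_mod_cast hI)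

/-- The indicator of any `k` coordinates is a nondegenerate weight for the Reed–Solomon code,
because these coordinates form an information set. -/
theorem nondegOn_indicator {F : Type} [Field F] {n k : ℕ} {α : Fin n → F}
    (hα : Function.Injective α) (I : Finset (Fin n)) (hI : I.card = k) :
    NondegOn (LinearMap.range (grsMap k α 1)) (fun i => if i ∈ I then 1 else 0) := by
  rintro x ⟨p, rfl⟩ hx
  have hp : p = 0 := by
    refine eq_zero_of_vanish hα p I hI.ge fun i hi => ?_
    -- Test against the codeword that is `1` at `i` and `0` elsewhere on `I`.
    have hdeg : Lagrange.basis I α i ∈ degreeLT F k := by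
      rw [mem_degreeLT, Lagrange.degree_basis hα.injOn hi, hI]
      have := Finset.card_pos.2 ⟨i, hi⟩
      exact_mod_cast (by omega : k - 1 < k)
    have h := hx _ ⟨⟨_, hdeg⟩, rfl⟩
    rw [Finset.sum_eq_single i] at h
    · simpa [grsMap_apply, hi, Lagrange.eval_basis_self hα.injOn hi] using h
    · intro j _ hj
      by_cases hjI : j ∈ I
      · simp [grsMap_apply, Lagrange.eval_basis_of_ne (v := α) hj.symm hjI]
      · simp [hjI]
    · simp
  simp [hp]

theorem exists_lcd_mds {F : Type} [Field F] [Fintype F] [DecidableEq F] {n k : ℕ}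
    (hF : 3 < Fintype.card F) (hn : n ≤ Fintype.card F) (hk : k ≤ n) :
    ∃ C : Submodule F (Fin n → F), IsLCDMDSCode k C := by
  obtain ⟨α⟩ : Nonempty (Fin n ↪ F) := Function.Embedding.nonempty_of_card_le (by simpa using hn)
  have hα := α.injective
  obtain ⟨g, hg⟩ : ∃ g : F, g ∉ ({0, 1, -1} : Finset F) := by
    by_contra hcon
    push Not at hcon
    have h1 : (Finset.univ : Finset F) ⊆ {0, 1, -1} := fun x _ => hcon x
    have h2 := (Finset.card_le_card h1).trans Finset.card_le_three
    rw [Finset.card_univ] at h2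
    omega
  simp only [Finset.mem_insert, Finset.mem_singleton, not_or] at hg
  obtain ⟨hg0, hg1, hgm⟩ := hg
  have hst : (1 : F) ≠ g ^ 2 := fun h =>
    (by simpa using h.symm : g = 1 ∨ g = -1).elim hg1 hgm
  obtain ⟨I, -, hI⟩ := Finset.exists_subset_card_eq
    (s := (Finset.univ : Finset (Fin n))) (n := k) (by simpa using hk)
  obtain ⟨d, hd, hnd⟩ := (nondegOn_indicator (k := k) hα I hI).exists_weights hst
  have hsq : ∀ i, ∃ b : F, b ≠ 0 ∧ b ^ 2 = d i := by
    intro i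
    rcases hd i with h | h
    · exact ⟨1, one_ne_zero, by simp [h]⟩
    · exact ⟨g, hg0, h.symm⟩
  choose a ha0 had using hsq
  refine ⟨LinearMap.range (grsMap k α a), ?_, ?_, ?_⟩
  · rw [LinearMap.finrank_range_of_inj, LinearEquiv.finrank_eq (degreeLTEquiv F k),
      Module.finrank_fin_fun]
    rw [injective_iff_map_eq_zero]
    intro p hp
    refine eq_zero_of_vanish hα p Finset.univ (by simpa using hk) fun i _ => ?_
    have h := congrFun hp i
    simpa [grsMap_apply, ha0 i] using h
  · rintro x ⟨p, rfl⟩ hx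
    have h0 : grsMap k α 1 p = 0 := by
      refine hnd _ ⟨p, rfl⟩ ?_
      rintro c ⟨r, rfl⟩
      rw [← hx _ ⟨r, rfl⟩]
      refine Finset.sum_congr rfl fun i _ => ?_
      simp only [grsMap_apply, ← had i, Pi.one_apply]
      ring
    ext i
    have h := congrFun h0 i
    simp only [grsMap_apply, Pi.one_apply, one_mul, Pi.zero_apply] at h
    simp [grsMap_apply, h]
  · rintro x ⟨p, rfl⟩ hx
    have hz : (Finset.univ.filter fun i => grsMap k α a p i = 0).card < k := by
      by_contra hcon
      refine hx ?_
      rw [eq_zero_of_vanish hα p _ (not_lt.1 hcon), map_zero]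
      intro i hi
      simpa [grsMap_apply, ha0 i] using hi
    have hs := Finset.card_filter_add_card_filter_not (s := (Finset.univ : Finset (Fin n)))
      (fun i => grsMap k α a p i = 0)
    rw [Finset.card_univ, Fintype.card_fin] at hs
    simp only [ne_eq]
    omega

theorem stmt3 (q n : ℕ) (hq : IsPrimePow q) (hqodd : Odd q) (hq5 : 5 ≤ q)
    (hqsq : ∃ s : ℕ, q = s ^ 2)
    (F : Type) [Field F] [Fintype F] [DecidableEq F]
    (hcard : Fintype.card F = q)
    (hnq : n < q) (hnodd : Odd (n - 1)) (hdvd : (n - 1) ∣ (q - 1))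
    (m : ℕ) (hm : 2 * m ≤ n) :
    ∃ C : Submodule F (Fin n → F), IsLCDMDSCode (n - 2 * m) C := by
  exact exists_lcd_mds (by omega) (by omega) (by omega)
end

section
/- Let α_1, …, α_n be distinct elements of F_q, set g(x) = ∏_{i=1}^n (x−α_i) and z = dg/dx, so that z(α_i) ≠ 0 for all i. For every integer k with 0 ≤ k ≤ n, the Euclidean dual (with respect to the standard dot product on F_q^n) of the code C = {(f(α_1), …, f(α_n)) : f ∈ F_q[x], deg f < k} is the code {(h(α_1)/z(α_1), …, h(α_n)/z(α_n)) : h ∈ F_q[x], deg h < n−k}. -/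
/-!
The proof rests on Lagrange interpolation: for a polynomial `P` of degree `< n`, the sum
`∑ i, P(α i) / z(α i)` is the coefficient of `X ^ (n - 1)` in `P` (`sum_eval_div_derivative`).

If `deg f < k` and `deg h < n - k`, then `deg (h * f) < n - 1`, so this coefficient vanishes for
`P = h * f`, and the second code lies in the dual. Conversely, for `x` in the dual, let `h` be the
polynomial of degree `< n` interpolating the values `x i * z(α i)`. If `h ≠ 0` had degree
`d ≥ n - k`, then pairing `x` with the codeword of `X ^ (n - 1 - d)`, whose degree is `< k`, would
give the leading coefficient of `h`, which is nonzero. Hence `deg h < n - k`.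
-/

open Polynomial

lemma eval_derivative_node {F : Type} [Field F] {n : ℕ} (α : Fin n → F) (i : Fin n) :
    (derivative (∏ j, (X - C (α j)) : F[X])).eval (α i)
      = ∏ j ∈ Finset.univ.erase i, (α i - α j) := by
  have h := Lagrange.eval_nodal_derivative_eval_node_eq (v := α) (Finset.mem_univ i)
  rwa [Lagrange.eval_nodal, Lagrange.nodal] at h

lemma eval_derivative_node_ne_zero {F : Type} [Field F] {n : ℕ} {α : Fin n → F}
    (hα : Function.Injective α) (i : Fin n) :
    (derivative (∏ j, (X - C (α j)) : F[X])).eval (α i) ≠ 0 := by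
  rw [eval_derivative_node, Finset.prod_ne_zero_iff]
  intro j hj
  exact sub_ne_zero.mpr fun h => (Finset.ne_of_mem_erase hj) (hα h).symm

/-- The top coefficient of the Lagrange interpolation formula. -/
lemma sum_eval_div_derivative {F : Type} [Field F] {n : ℕ} {α : Fin n → F}
    (hα : Function.Injective α) {P : F[X]} (hP : P.degree < (n : WithBot ℕ)) :
    ∑ i, P.eval (α i) / (derivative (∏ j, (X - C (α j)) : F[X])).eval (α i)
      = P.coeff (n - 1) := by
  have h := Lagrange.coeff_eq_sum (s := Finset.univ) (v := α) hα.injOn (P := P) (by simpa using hP)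
  simp only [Finset.card_univ, Fintype.card_fin] at h
  rw [h]
  exact Finset.sum_congr rfl fun i _ => by rw [eval_derivative_node]

theorem stmt10 (F : Type) [Field F] [Fintype F] (n k : ℕ) (hk : k ≤ n)
    (α : Fin n → F) (hα : Function.Injective α) :
    let g : F[X] := ∏ i, (X - C (α i))
    let z : F[X] := derivative g
    {x : Fin n → F | ∀ c : Fin n → F,
        (∃ f : F[X], f.degree < (k : WithBot ℕ) ∧ c = fun i => f.eval (α i)) →
        ∑ i, x i * c i = 0}
      = {x : Fin n → F | ∃ h : F[X], h.degree < ((n - k : ℕ) : WithBot ℕ) ∧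
          x = fun i => h.eval (α i) / z.eval (α i)} := by
  intro g z
  have hz : ∀ i, z.eval (α i) ≠ 0 := eval_derivative_node_ne_zero hα
  ext x
  simp only [Set.mem_ofPred_eq]
  constructor
  · intro hx
    let r : Fin n → F := fun i => x i * z.eval (α i)
    let h : F[X] := Lagrange.interpolate Finset.univ α r
    have hdeg : h.degree < (n : WithBot ℕ) := by
      have := Lagrange.degree_interpolate_lt (s := Finset.univ) (v := α) r hα.injOn
      rwa [Finset.card_univ, Fintype.card_fin] at this
    have heval : ∀ i, h.eval (α i) = x i * z.eval (α i) := fun i =>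
      Lagrange.eval_interpolate_at_node r hα.injOn (Finset.mem_univ i)
    refine ⟨h, ?_, funext fun i => by rw [heval, mul_div_cancel_right₀ _ (hz i)]⟩
    by_contra hlt
    have h0 : h ≠ 0 := by
      intro h0
      rw [h0, degree_zero] at hlt
      exact hlt (WithBot.bot_lt_coe _)
    rw [degree_eq_natDegree h0, Nat.cast_lt] at hlt hdeg
    have hsum := hx _ ⟨X ^ (n - 1 - h.natDegree), by
      rw [degree_X_pow, Nat.cast_lt]; omega, rfl⟩
    have hP : (h * X ^ (n - 1 - h.natDegree)).degree < (n : WithBot ℕ) := by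
      rw [degree_mul, degree_X_pow, degree_eq_natDegree h0, ← Nat.cast_add, Nat.cast_lt]
      omega
    have hcoeff := sum_eval_div_derivative hα hP
    have htop : (h * X ^ (n - 1 - h.natDegree)).coeff (n - 1) = h.leadingCoeff := by
      conv_lhs => rw [show n - 1 = h.natDegree + (n - 1 - h.natDegree) by omega]
      rw [show h.natDegree + (n - 1 - h.natDegree) - h.natDegree = n - 1 - h.natDegree by omega,
        coeff_mul_X_pow, leadingCoeff]
    refine leadingCoeff_ne_zero.mpr h0 ?_
    rw [← htop, ← hcoeff, ← hsum]
    refine Finset.sum_congr rfl fun i _ => ?_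
    rw [eval_mul, heval, mul_right_comm]
    exact mul_div_cancel_right₀ _ (hz i)
  · rintro ⟨h, hh, rfl⟩ c ⟨f, hf, rfl⟩
    have hP : (h * f).degree < ((n - 1 : ℕ) : WithBot ℕ) := by
      by_cases h0 : h = 0
      · simp [h0]
      by_cases f0 : f = 0
      · simp [f0]
      rw [degree_eq_natDegree h0, Nat.cast_lt] at hh
      rw [degree_eq_natDegree f0, Nat.cast_lt] at hf
      rw [degree_mul, degree_eq_natDegree h0, degree_eq_natDegree f0, ← Nat.cast_add, Nat.cast_lt]
      omega
    have hcoeff := sum_eval_div_derivative hα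
      (hP.trans_le (Nat.cast_le.mpr (Nat.sub_le n 1)))
    rw [coeff_eq_zero_of_degree_lt hP] at hcoeff
    rw [← hcoeff]
    refine Finset.sum_congr rfl fun i _ => ?_
    rw [eval_mul, div_mul_eq_mul_div]
end

section
/- Let α_1, …, α_n be distinct elements of F_q, let v_1, …, v_n be nonzero elements of F_q, and let s be an integer with s < n. Let a, b ∈ F_q[x] be nonzero coprime polynomials such that a(α_i) ≠ 0 and b(α_i) ≠ 0 for all i, and deg a + deg b > s. Define C_A = {(v_1·a(α_1)f(α_1), …, v_n·a(α_n)f(α_n)) : f ∈ F_q[x], deg a + deg f ≤ s} and C_B = {(v_1·b(α_1)h(α_1), …, v_n·b(α_n)h(α_n)) : h ∈ F_q[x], deg b + deg h ≤ s}. Then C_A ∩ C_B = {0}. -/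
/-!
A common word of the two codes comes from `f` and `h` with `a f` and `b h` agreeing at the `n`
points `α i`. Both products have degree at most `s < n`, so `a f = b h`. As `a` and `b` are
coprime, `b ∣ f`; if `f ≠ 0` this forces `deg a + deg b ≤ deg a + deg f ≤ s`, which is excluded.
-/

open Polynomial

theorem stmt11 (F : Type) [Field F] [Fintype F] (n : ℕ)
    (α : Fin n → F) (hα : Function.Injective α)
    (v : Fin n → F) (hv : ∀ i, v i ≠ 0)
    (s : ℤ) (hs : s < (n : ℤ))
    (a b : F[X]) (ha : a ≠ 0) (hb : b ≠ 0) (hab : IsCoprime a b)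
    (haα : ∀ i, a.eval (α i) ≠ 0) (hbα : ∀ i, b.eval (α i) ≠ 0)
    (hdeg : s < (a.natDegree : ℤ) + (b.natDegree : ℤ)) :
    {c : Fin n → F | ∃ f : F[X],
        (f ≠ 0 → (a.natDegree : ℤ) + (f.natDegree : ℤ) ≤ s) ∧
        c = fun i => v i * a.eval (α i) * f.eval (α i)} ∩
      {c : Fin n → F | ∃ h : F[X],
        (h ≠ 0 → (b.natDegree : ℤ) + (h.natDegree : ℤ) ≤ s) ∧
        c = fun i => v i * b.eval (α i) * h.eval (α i)}
      = {0} := by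
  ext c
  simp only [Set.mem_inter_iff, Set.mem_ofPred_eq, Set.mem_singleton_iff]
  constructor
  · rintro ⟨⟨f, hf, hcf⟩, ⟨h, hh, hch⟩⟩
    by_cases hf0 : f = 0
    · subst hf0
      rw [hcf]
      funext i
      simp
    exfalso
    have hfs := hf hf0
    have h1 : ((a * f).natDegree : ℤ) ≤ s := by
      rw [natDegree_mul ha hf0]
      exact_mod_cast hfs
    have h2 : ((b * h).natDegree : ℤ) ≤ s := by
      by_cases hh0 : h = 0
      · subst hh0
        rw [mul_zero, natDegree_zero]
        omega
      · rw [natDegree_mul hb hh0]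
        exact_mod_cast hh hh0
    have h3 := natDegree_sub_le (a * f) (b * h)
    -- `a f - b h` has degree at most `s < n` and vanishes at the `n` points `α i`.
    have h4 : a * f - b * h = 0 := by
      refine eq_zero_of_natDegree_lt_card_of_eval_eq_zero _ hα (fun i => ?_) ?_
      · have e : v i * a.eval (α i) * f.eval (α i) = v i * b.eval (α i) * h.eval (α i) :=
          congrFun (hcf.symm.trans hch) i
        rw [mul_assoc, mul_assoc] at e
        simp [mul_left_cancel₀ (hv i) e]
      · rw [Fintype.card_fin]
        omega
    -- Coprimality gives `b ∣ f`, so `deg a + deg b ≤ deg a + deg f ≤ s`, a contradiction.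
    have h5 : b ∣ f := hab.symm.dvd_of_dvd_mul_left ⟨h, sub_eq_zero.mp h4⟩
    have h6 := natDegree_le_of_dvd h5 hf0
    omega
  · rintro rfl
    exact ⟨⟨0, by simp, by funext i; simp⟩, ⟨0, by simp, by funext i; simp⟩⟩
end

section
/- Let q = p^r be an odd prime power, write q−1 = ℓ·d with p < d, and let γ be a generator of the multiplicative group F_q^*. Set f(x) = ∏_{i=1}^p (x − γ^{iℓ}) and g(x) = f(x^ℓ) ∈ F_q[x]. Then: (a) Σ_{i=1}^p γ^{iℓ} ≠ 0 and f'(0) ≠ 0; (b) g has exactly pℓ distinct roots, all lying in F_q^*, so g has no multiple roots; (c) the formal derivative satisfies g'(x) = ℓ x^{ℓ−1} f'(x^ℓ) and deg g' = ℓ(p−1) − 1. -/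
/-!
Put `ω = γ ^ ℓ`, an element of order `d > p`, so that `f = ∏ (X - ω ^ i)` has distinct roots.

* In characteristic `p` the geometric sum `ω + ω² + ⋯ + ω ^ p` equals `ω (ω - 1) ^ (p - 1)`, which
  is nonzero as `ω ≠ 1` (`geom_ne_zero`). The value `f'(0)` is, up to the nonzero factor
  `-∏ (-ω ^ i)`, the same sum for `ω⁻¹`.
* The roots of `f` are distinct `d`-th roots of unity, so `f ∣ X ^ d - 1`, hence
  `g ∣ X ^ (q - 1) - 1 ∣ X ^ q - X`. Thus `g` inherits splitting and separability from `X ^ q - X`.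
* The coefficient of `X ^ (p - 1)` in `f'` is `p = 0`, and that of `X ^ (p - 2)` is
  `-(p - 1) ∑ ω ^ i = ∑ ω ^ i ≠ 0`; so `deg f' = p - 2`, and the chain rule gives `deg g'`.
-/

open Polynomial

lemma geom_ne_zero {F : Type} [Field F] {p : ℕ} (hp : p.Prime) (hchar : CharP F p)
    {w : F} (h0 : w ≠ 0) (h1 : w ≠ 1) : ∑ i ∈ Finset.Icc 1 p, w ^ i ≠ 0 := by
  have : Fact p.Prime := ⟨hp⟩
  have h2 : w - 1 ≠ 0 := sub_ne_zero.2 h1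
  have h3 : ∑ i ∈ Finset.Icc 1 p, w ^ i = w * ∑ i ∈ Finset.range p, w ^ i := by
    rw [Finset.mul_sum, Finset.range_eq_Ico,
      Finset.sum_Ico_eq_sum_range, ← Finset.Ico_add_one_right_eq_Icc, Finset.sum_Ico_eq_sum_range]
    refine Finset.sum_congr (by simp) fun i _ => ?_
    rw [zero_add, add_comm, pow_succ']
  intro h
  rw [h3] at h
  have h4 : ∑ i ∈ Finset.range p, w ^ i = 0 := (mul_eq_zero.1 h).resolve_left h0
  have h5 := geom_sum_mul w p
  rw [h4, zero_mul, ← one_pow (M := F) p, ← sub_pow_char] at h5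
  exact pow_ne_zero p h2 h5.symm

/-- The logarithmic derivative of `∏ (X - a i)` at `0`, with denominators cleared. -/
lemma eval_zero_derivative_prod {F : Type} [Field F] (s : Finset ℕ) (a : ℕ → F)
    (ha : ∀ i ∈ s, a i ≠ 0) :
    (derivative (∏ i ∈ s, (X - C (a i)))).eval 0 = -(∏ i ∈ s, (-a i)) * ∑ i ∈ s, (a i)⁻¹ := by
  rw [derivative_prod_finset, eval_finsetSum, Finset.mul_sum]
  refine Finset.sum_congr rfl fun i hi => ?_
  rw [← Finset.mul_prod_erase s _ hi]
  simp only [eval_mul, eval_prod, eval_sub, eval_X, eval_C, derivative_sub, derivative_X,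
    derivative_C, zero_sub, sub_zero, eval_one, mul_one]
  field_simp [ha i hi]

theorem stmt15 (p r ℓ d : ℕ) (hp : p.Prime) (hpodd : Odd p)
    (F : Type) [Field F] [Fintype F] [DecidableEq F]
    (hchar : CharP F p) (hcard : Fintype.card F = p ^ r)
    (hld : p ^ r - 1 = ℓ * d) (hpd : p < d)
    (γ : Fˣ) (hγ : ∀ x : Fˣ, x ∈ Subgroup.zpowers γ) :
    let f : F[X] := ∏ i ∈ Finset.Icc 1 p, (X - C ((γ : F) ^ (i * ℓ)))
    let g : F[X] := f.comp (X ^ ℓ)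
    ((∑ i ∈ Finset.Icc 1 p, (γ : F) ^ (i * ℓ)) ≠ 0 ∧
      (derivative f).eval 0 ≠ 0) ∧
    (g.roots.card = p * ℓ ∧ g.roots.toFinset.card = p * ℓ ∧
      (0 : F) ∉ g.roots ∧ Squarefree g) ∧
    (derivative g = C (ℓ : F) * X ^ (ℓ - 1) * (derivative f).comp (X ^ ℓ) ∧
      (derivative g).natDegree = ℓ * (p - 1) - 1) := by
  intro f g
  have : Fact p.Prime := ⟨hp⟩
  have hp2 := hp.two_le
  have hq1 : 1 < p ^ r := hcard ▸ Fintype.one_lt_card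
  have hℓ0 : 0 < ℓ := by
    rcases Nat.eq_zero_or_pos ℓ with h | h
    · rw [h, zero_mul] at hld; omega
    · exact h
  have hord : orderOf γ = ℓ * d := by
    rw [orderOf_eq_card_of_forall_mem_zpowers hγ, Nat.card_eq_fintype_card, Fintype.card_units,
      hcard, hld]
  set w : F := (γ : F) ^ ℓ with hw
  have hww : ∀ i, (γ : F) ^ (i * ℓ) = w ^ i := fun i => by rw [hw, ← pow_mul, mul_comm]
  have hw0 : w ≠ 0 := pow_ne_zero _ γ.ne_zero
  have hwo : orderOf w = d := by
    rw [hw, orderOf_pow_of_dvd hℓ0.ne' (by rw [orderOf_units, hord]; exact dvd_mul_right _ _),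
      orderOf_units, hord, Nat.mul_div_cancel_left _ hℓ0]
  have hw1 : w ≠ 1 := fun h => by rw [h, orderOf_one] at hwo; omega
  have hwd : w ^ d = 1 := hwo ▸ pow_orderOf_eq_one w
  have hinj : Set.InjOn (fun i : ℕ => w ^ i) (Finset.Icc 1 p) := by
    intro i hi j hj hij
    simp only [Finset.coe_Icc, Set.mem_Icc] at hi hj
    exact pow_injOn_Iio_orderOf (by simp [hwo]; omega) (by simp [hwo]; omega) hij
  have hf : f = ∏ i ∈ Finset.Icc 1 p, (X - C (w ^ i)) := by simp only [f, hww]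
  have hcard' : (Finset.Icc 1 p).card = p := by simp
  have hsum : ∑ i ∈ Finset.Icc 1 p, w ^ i ≠ 0 := geom_ne_zero hp hchar hw0 hw1
  have hfdeg : f.natDegree = p := by
    rw [hf, natDegree_finsetProd_X_sub_C_eq_card, hcard']
  have hgdeg : g.natDegree = p * ℓ := by simp [g, natDegree_comp, hfdeg]
  have hfd : f ∣ X ^ d - 1 := by
    rw [hf]
    refine Finset.prod_dvd_of_coprime ?_ ?_
    · intro i hi j hj hij
      exact isCoprime_X_sub_C_of_isUnit_sub
        (sub_ne_zero.2 fun h => hij (hinj hi hj h)).isUnit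
    · intro i _
      rw [dvd_iff_isRoot]
      simp [← pow_mul, mul_comm i d, pow_mul w d i, hwd]
  have hgd : g ∣ X ^ (p ^ r) - X := by
    obtain ⟨k, hk⟩ := hfd
    refine ⟨k.comp (X ^ ℓ) * X, ?_⟩
    have h1 : g * k.comp (X ^ ℓ) = X ^ (ℓ * d) - 1 := by
      rw [← mul_comp, ← hk]; simp [pow_mul]
    have h2 : p ^ r = ℓ * d + 1 := by omega
    rw [← mul_assoc, h1, h2]; ring
  have hq0 : (X ^ (p ^ r) - X : F[X]) ≠ 0 := FiniteField.X_pow_card_sub_X_ne_zero F hq1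
  have hsep : g.Separable :=
    (galois_poly_separable p (p ^ r) (dvd_pow_self p (by rintro rfl; simp at hq1))).of_dvd hgd
  have hspl : g.Splits := by
    have h := (FiniteField.isSplittingField_sub F F).splits
    rw [hcard] at h
    exact Splits.of_dvd (by simpa using h) hq0 hgd
  have hgc : g.roots.card = p * ℓ := by rw [← hspl.natDegree_eq_card_roots, hgdeg]
  have hderg : derivative g = C (ℓ : F) * X ^ (ℓ - 1) * (derivative f).comp (X ^ ℓ) := by
    simp only [g, derivative_comp, derivative_X_pow]
  have hℓF : (ℓ : F) ≠ 0 := by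
    rw [Ne, CharP.cast_eq_zero_iff F p]
    intro h
    have h1 : p ∣ p ^ r - 1 := hld ▸ h.mul_right d
    have h2 : p ∣ p ^ r := dvd_pow_self p (by rintro rfl; simp at hq1)
    have h3 := (Nat.dvd_sub_iff_right hq1.le h2).1 h1
    exact hp.one_lt.ne' (Nat.dvd_one.1 h3)
  have hfc : f.coeff (p - 1) = -∑ i ∈ Finset.Icc 1 p, w ^ i := by
    have h := prod_X_sub_C_coeff_card_pred (Finset.Icc 1 p) (fun i => w ^ i) (by simp; omega)
    rw [hcard'] at h
    rw [hf, h]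
  have hpF : (p : F) = 0 := CharP.cast_eq_zero F p
  have hf'deg : (derivative f).natDegree = p - 2 := by
    apply le_antisymm
    · rw [natDegree_le_iff_coeff_eq_zero]
      intro n hn
      rw [coeff_derivative]
      rcases (show n + 1 = p ∨ p < n + 1 by omega) with h | h
      · rw [show (n : F) + 1 = 0 by rw [← hpF, ← h]; push_cast; rfl, mul_zero]
      · rw [coeff_eq_zero_of_natDegree_lt (by rw [hfdeg]; exact h), zero_mul]
    · apply le_natDegree_of_ne_zero
      rw [coeff_derivative, show p - 2 + 1 = p - 1 by omega, hfc]
      have h : ((p - 2 : ℕ) : F) + 1 = -1 := by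
        rw [Nat.cast_sub hp2, hpF]; push_cast; ring
      rw [h]
      simpa using hsum
  have hf'0 : derivative f ≠ 0 := by
    intro h
    have h1 := coeff_derivative f (p - 2)
    rw [h, show p - 2 + 1 = p - 1 by omega, hfc, Nat.cast_sub hp2, hpF] at h1
    apply hsum
    simp only [coeff_zero] at h1
    push_cast at h1
    linear_combination -h1
  refine ⟨⟨by simpa only [hww] using hsum, ?_⟩,
    ⟨hgc, ?_, ?_, hsep.squarefree⟩, hderg, ?_⟩
  · rw [hf, eval_zero_derivative_prod _ _ fun i _ => pow_ne_zero i hw0]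
    refine mul_ne_zero (neg_ne_zero.2 (Finset.prod_ne_zero_iff.2 fun i _ =>
      neg_ne_zero.2 (pow_ne_zero i hw0))) ?_
    simp only [← inv_pow]
    exact geom_ne_zero hp hchar (inv_ne_zero hw0) (by simpa using hw1)
  · rw [Multiset.toFinset_card_of_nodup (nodup_roots hsep), hgc]
  · intro h
    have h1 := (mem_roots'.1 h).2
    simp only [g, hf, IsRoot, eval_comp, eval_pow, eval_X, zero_pow hℓ0.ne', eval_prod,
      Finset.prod_eq_zero_iff, eval_sub, eval_C, zero_sub, neg_eq_zero] at h1
    obtain ⟨i, _, hi⟩ := h1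
    exact pow_ne_zero i hw0 hi
  · have hc : (derivative f).comp (X ^ ℓ) ≠ 0 := by
      rw [← expand_eq_comp_X_pow]
      exact (expand_ne_zero hℓ0).2 hf'0
    rw [hderg, mul_assoc, natDegree_C_mul hℓF, natDegree_mul (pow_ne_zero _ X_ne_zero) hc,
      natDegree_X_pow, natDegree_comp, hf'deg, natDegree_X_pow]
    obtain ⟨m, rfl⟩ := Nat.exists_eq_add_of_le hp2
    rw [show 2 + m - 2 = m by omega, show 2 + m - 1 = m + 1 by omega, mul_add, mul_comm]
    omega
end

section
/- Let p be an odd prime, let r > 1 be an integer, and write N_t = (p^t − 1)/(p − 1). In F_p[x], the polynomial (x+1)^{N_r} − 1 is divisible by x; let g be the quotient, i.e. x·g(x) = (x+1)^{N_r} − 1, and likewise let h satisfy x·h(x) = (x+1)^{N_{r−1}} − 1. Then the formal derivative of g satisfies g'(x) = −x^{p−2}·h(x)^p. -/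
/-!
Write `M = N_{r-1}` and `y = X + 1`, so that `N_r = p * M + 1` and `X * g = y ^ (p * M + 1) - 1`.
In characteristic `p`, differentiating gives `g + X * g' = y ^ (p * M)`. Multiplying by `X` and
substituting for `X * g` yields `X ^ 2 * g' = 1 - y ^ (p * M) = -(y ^ M - 1) ^ p = -(X * h) ^ p`
by Frobenius, and `X ^ 2` can be cancelled.
-/

open Polynomial

theorem stmt16 (p r : ℕ) (hp : p.Prime) (hpodd : Odd p) (hr : 1 < r)
    (g h : (ZMod p)[X])
    (hg : X * g = (X + 1) ^ ((p ^ r - 1) / (p - 1)) - 1)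
    (hh : X * h = (X + 1) ^ ((p ^ (r - 1) - 1) / (p - 1)) - 1) :
    derivative g = -(X ^ (p - 2) * h ^ p) := by
  have : Fact p.Prime := ⟨hp⟩
  obtain ⟨s, rfl⟩ : ∃ s, r = s + 1 := ⟨r - 1, by omega⟩
  have hN : (p ^ (s + 1) - 1) / (p - 1) = p * ((p ^ s - 1) / (p - 1)) + 1 := by
    rw [← Nat.geomSum_eq hp.two_le, ← Nat.geomSum_eq hp.two_le, geom_sum_succ]
  rw [hN] at hg
  rw [Nat.add_sub_cancel] at hh
  generalize (p ^ s - 1) / (p - 1) = M at hg hh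
  have hd : g + X * derivative g = (X + 1) ^ (p * M) := by
    have := congrArg derivative hg
    simpa [derivative_mul, derivative_pow] using this
  have hF : (X * h) ^ p = (X + 1) ^ (p * M) - 1 := by
    rw [hh, sub_pow_char, one_pow, ← pow_mul, mul_comm]
  have hX : (X : (ZMod p)[X]) ^ p = X ^ 2 * X ^ (p - 2) := by
    rw [← pow_add, Nat.add_sub_cancel' hp.two_le]
  rw [mul_pow, hX] at hF
  apply mul_left_cancel₀ (pow_ne_zero 2 (X_ne_zero (R := ZMod p)))
  rw [pow_succ] at hg
  linear_combination X * hd - hg + hF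
end

section
/- Let q = p^r for a prime p, let V ⊂ F_q be an F_p-linear subspace of dimension t < r, and set g_V(x) = ∏_{α∈V}(x−α). Let α_1, …, α_d ∈ F_q lie in pairwise distinct cosets of V (equivalently, g_V(α_1), …, g_V(α_d) are pairwise distinct), set f(x) = ∏_{i=1}^d (x − g_V(α_i)) and g(x) = f(g_V(x)). Then: (a) g has no multiple roots and its set of roots is exactly the union of the cosets α_1+V, …, α_d+V (so g has d·p^t distinct roots in F_q); (b) the formal derivative satisfies g'(x) = f'(g_V(x)) · ∏_{α∈V, α≠0} α; (c) if gcd(d,p) = 1 then deg g' = (d−1)·p^t. -/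
/-!
Write `gV = ∏_{β ∈ V} (X - β)`. Since `V` is an additive group, `gV` takes the same value on all of
`a + V`; comparing degrees, `gV - gV(a) = ∏_{β ∈ V} (X - (a + β))`
(`subspacePoly_sub_const`). Hence `g = ∏_i (gV - gV(α_i))` is a product of `X - γ` over the
`d * |V|` distinct elements `γ` of the cosets `α_i + V`, which is (a).

The derivative `gV'` has degree less than `|V|` and takes the value `∏_{β ≠ v} (v - β)` at each
`v ∈ V`. The substitution `β ↦ v - β` shows that this is `∏_{β ≠ 0} β`, whatever `v` is, so `gV'`
is constant (`derivative_subspacePoly`) and (b) is the chain rule. For (c), the coefficient of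
`X ^ (d - 1)` in `f'` is `d`, which is nonzero in `F` when `d` is prime to `p`.
-/

open Polynomial

lemma subspacePoly_eval_add {F : Type*} [Field F] (V : Finset F) (haddV : ∀ a ∈ V, ∀ b ∈ V, a + b ∈ V)
    (hnegV : ∀ a ∈ V, -a ∈ V) (a v : F) (hv : v ∈ V) :
    (∏ β ∈ V, (X - C β)).eval (a + v) = (∏ β ∈ V, (X - C β)).eval a := by
  simp only [eval_prod, eval_sub, eval_X, eval_C]
  refine Finset.prod_bij' (fun β _ => β - v) (fun β _ => β + v) ?_ ?_ ?_ ?_ ?_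
  · intro β hβ
    simpa [sub_eq_add_neg] using haddV _ hβ _ (hnegV _ hv)
  · intro β hβ
    exact haddV _ hβ _ hv
  · intro β _; ring
  · intro β _; ring
  · intro β _; ring

/-- Both sides agree on the `|V|` points of `a + V`, and their difference has degree less than
`|V|` because both are monic of degree `|V|`. -/
lemma subspacePoly_sub_const {F : Type*} [Field F] [DecidableEq F] (V : Finset F)
    (h0V : (0 : F) ∈ V)
    (haddV : ∀ a ∈ V, ∀ b ∈ V, a + b ∈ V)
    (hnegV : ∀ a ∈ V, -a ∈ V) (a : F) :
    (∏ β ∈ V, (X - C β)) - C ((∏ β ∈ V, (X - C β)).eval a) = ∏ β ∈ V, (X - C (a + β)) := by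
  have hcard : 0 < V.card := Finset.card_pos.mpr ⟨0, h0V⟩
  have hdeg : (∏ β ∈ V, (X - C β) : F[X]).degree = V.card := by
    simp [degree_prod]
  have hmon : (∏ β ∈ V, (X - C β) : F[X]).Monic := monic_prod_X_sub_C _ _
  have hlt : (C ((∏ β ∈ V, (X - C β)).eval a) : F[X]).degree
      < (∏ β ∈ V, (X - C β) : F[X]).degree := by
    rw [hdeg]
    exact degree_C_le.trans_lt (by exact_mod_cast hcard)
  have hdeg1 := (degree_sub_eq_left_of_degree_lt hlt).trans hdeg
  have hdeg2 : (∏ β ∈ V, (X - C (a + β)) : F[X]).degree = V.card := by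
    simp only [degree_prod, degree_X_sub_C]; simp
  have hmon2 : (∏ β ∈ V, (X - C (a + β)) : F[X]).Monic :=
    monic_prod_of_monic _ _ fun β _ => monic_X_sub_C _
  have hmon1 := hmon.sub_of_left hlt
  apply eq_of_degree_sub_lt_of_eval_finset_eq (V.image (a + ·))
  · rw [Finset.card_image_of_injective _ (add_right_injective a), ← hdeg1]
    exact degree_sub_lt_left (hdeg1.trans hdeg2.symm) hmon1.ne_zero
      (hmon1.leadingCoeff.trans hmon2.leadingCoeff.symm)
  · intro x hx
    obtain ⟨v, hv, rfl⟩ := Finset.mem_image.mp hx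
    have h2 : (∏ β ∈ V, (X - C (a + β)) : F[X]).eval (a + v) = 0 := by
      rw [eval_prod]
      exact Finset.prod_eq_zero hv (by simp)
    rw [h2, eval_sub, eval_C, subspacePoly_eval_add V haddV hnegV a v hv, sub_self]

lemma derivative_subspacePoly {F : Type*} [Field F] [DecidableEq F] (V : Finset F)
    (h0V : (0 : F) ∈ V)
    (haddV : ∀ a ∈ V, ∀ b ∈ V, a + b ∈ V) (hnegV : ∀ a ∈ V, -a ∈ V) :
    derivative (∏ β ∈ V, (X - C β)) = C (∏ β ∈ V.erase 0, β) := by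
  have hcard : 0 < V.card := Finset.card_pos.mpr ⟨0, h0V⟩
  have hdeg : (∏ β ∈ V, (X - C β) : F[X]).degree = V.card := by
    simp [degree_prod]
  have hne : (∏ β ∈ V, (X - C β) : F[X]) ≠ 0 := (monic_prod_X_sub_C _ _).ne_zero
  apply eq_of_degree_sub_lt_of_eval_finset_eq V
  · refine (degree_sub_le _ _).trans_lt (max_lt ?_ ?_)
    · rw [← hdeg]
      exact degree_derivative_lt hne
    · exact degree_C_le.trans_lt (by exact_mod_cast hcard)
  · intro v hv
    rw [derivative_prod_finset, eval_finset_sum, Finset.sum_eq_single v]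
    · simp only [derivative_X_sub_C, mul_one, eval_prod, eval_sub, eval_X, eval_C]
      refine Finset.prod_bij' (fun β _ => v - β) (fun β _ => v - β) ?_ ?_ ?_ ?_ ?_
      · intro β hβ
        rw [Finset.mem_erase] at hβ ⊢
        exact ⟨sub_ne_zero.mpr hβ.1.symm,
          by simpa [sub_eq_add_neg] using haddV _ hv _ (hnegV _ hβ.2)⟩
      · intro β hβ
        rw [Finset.mem_erase] at hβ ⊢
        exact ⟨by simpa using hβ.1,
          by simpa [sub_eq_add_neg] using haddV _ hv _ (hnegV _ hβ.2)⟩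
      · intro β _; ring
      · intro β _; ring
      · intro β _; rfl
    · intro b _ hbv
      rw [eval_mul, eval_prod, Finset.prod_eq_zero (Finset.mem_erase.mpr ⟨hbv.symm, hv⟩) (by simp),
        zero_mul]
    · exact fun h => absurd hv h

theorem stmt18 (p r t d : ℕ) (hp : p.Prime) (htr : t < r)
    (F : Type) [Field F] [Fintype F] [DecidableEq F]
    (hchar : CharP F p) (hcard : Fintype.card F = p ^ r)
    (V : Finset F) (h0V : (0 : F) ∈ V)
    (haddV : ∀ a ∈ V, ∀ b ∈ V, a + b ∈ V) (hnegV : ∀ a ∈ V, -a ∈ V)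
    (hcardV : V.card = p ^ t)
    (hd1 : 1 ≤ d) (hd2 : d ≤ p ^ (r - t))
    (α : Fin d → F) (hα : ∀ i j, i ≠ j → α i - α j ∉ V) :
    let gV : F[X] := ∏ β ∈ V, (X - C β)
    let f : F[X] := ∏ i, (X - C (gV.eval (α i)))
    let g : F[X] := f.comp gV
    (Squarefree g ∧ (∀ x : F, g.IsRoot x ↔ ∃ i, x - α i ∈ V) ∧
      g.roots.toFinset.card = d * p ^ t) ∧
    derivative g = (derivative f).comp gV * C (∏ β ∈ V.erase 0, β) ∧
    (Nat.gcd d p = 1 → (derivative g).natDegree = (d - 1) * p ^ t) := by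
  intro gV f g
  -- the union of the cosets `α i + V`
  let S : Finset F := (Finset.univ ×ˢ V).image (fun x : Fin d × F => α x.1 + x.2)
  have hinj : Set.InjOn (fun x : Fin d × F => α x.1 + x.2)
      ((Finset.univ ×ˢ V : Finset (Fin d × F)) : Set (Fin d × F)) := by
    rintro ⟨i, b⟩ hb ⟨j, c⟩ hc h
    simp only [Finset.coe_product, Set.mem_prod, Finset.mem_coe] at hb hc h
    have hij : i = j := by
      by_contra hij
      apply hα i j hij
      have : α i - α j = c + -b := by linear_combination h
      rw [this]
      exact haddV _ hc.2 _ (hnegV _ hb.2)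
    subst hij
    rw [add_left_cancel h]
  have hg : g = ∏ γ ∈ S, (X - C γ) := by
    rw [Finset.prod_image hinj, Finset.prod_product]
    simp only [g, f, prod_comp, sub_comp, X_comp, C_comp]
    exact Finset.prod_congr rfl fun i _ => subspacePoly_sub_const V h0V haddV hnegV (α i)
  have hder : derivative g = (derivative f).comp gV * C (∏ β ∈ V.erase 0, β) := by
    have h := derivative_subspacePoly V h0V haddV hnegV
    simp only [g, derivative_comp]
    rw [mul_comm, h]
  refine ⟨⟨?_, ?_, ?_⟩, hder, ?_⟩
  · rw [hg]
    exact (separable_prod_X_sub_C_iff'.mpr fun x _ y _ h => h).squarefree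
  · intro x
    rw [hg, IsRoot, eval_prod, Finset.prod_eq_zero_iff]
    constructor
    · rintro ⟨γ, hγ, h⟩
      obtain ⟨⟨i, b⟩, hb, rfl⟩ := Finset.mem_image.mp hγ
      refine ⟨i, ?_⟩
      have hx : x - α i = b := by
        simp only [eval_sub, eval_X, eval_C] at h
        linear_combination h
      rw [hx]
      exact (Finset.mem_product.mp hb).2
    · rintro ⟨i, hi⟩
      exact ⟨x, Finset.mem_image.mpr ⟨(i, x - α i), by simp [hi], by simp⟩, by simp⟩
  · rw [hg, roots_prod_X_sub_C, Finset.val_toFinset, Finset.card_image_of_injOn hinj]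
    simp [hcardV]
  · intro hdp
    have hc : (∏ β ∈ V.erase 0, β) ≠ 0 :=
      Finset.prod_ne_zero_iff.mpr fun β hβ => (Finset.mem_erase.mp hβ).1
    have hfdeg : f.natDegree = d := by simp [f]
    have hfmon : f.Monic := monic_prod_of_monic _ _ fun i _ => monic_X_sub_C _
    have hdF : (d : F) ≠ 0 := by
      rw [Ne, CharP.cast_eq_zero_iff F p]
      intro h
      exact hp.one_lt.ne' (by rw [← Nat.gcd_eq_right h, hdp])
    have hcoeff : (derivative f).coeff (d - 1) ≠ 0 := by
      have hlc : f.coeff d = 1 := by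
        have := hfmon.coeff_natDegree
        rwa [hfdeg] at this
      rw [coeff_derivative, Nat.sub_add_cancel hd1, hlc, one_mul]
      have : ((d - 1 : ℕ) : F) + 1 = d := by exact_mod_cast congrArg _ (Nat.sub_add_cancel hd1)
      rwa [this]
    have hf' : (derivative f).natDegree = d - 1 := by
      refine le_antisymm ?_ (le_natDegree_of_ne_zero hcoeff)
      have := natDegree_derivative_le f
      rwa [hfdeg] at this
    have hgV : gV.natDegree = p ^ t := by simp [gV, hcardV]
    rw [hder, natDegree_mul_C hc, natDegree_comp, hf', hgV]
end
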